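/- arXiv:math/0307401 — 2 statements merged into one kernel-verified Lean document; each statement's English description precedes it below -/
import Mathlib

section
/- Let x be a finite binary word avoiding α-powers, where 2 < α ≤ 7/3. Then there exist words u, v ∈ {ε, 0, 1, 00, 11} and a finite binary word y avoiding α-powers such that x = u μ(y) v. -/
/-- The Thue–Morse morphism `μ` on a single letter (`false` = 0, `true` = 1):
`μ(0) = 01`, `μ(1) = 10`. -/
def muLetter : Bool → List Bool
  | false => [false, true]
  | true  => [true, false]

/-- The Thue–Morse morphism `μ` on binary words. -/
def mu (w : List Bool) : List Bool := (w.map muLetter).flatten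

/-- `z` is a `β`-power (for a rational `β`): `z = xⁿx'` with `x'` a prefix of `x`
and `n + |x'|/|x| = β`. -/
def IsPower (β : ℚ) (z : List Bool) : Prop :=
  ∃ (n : ℕ) (x x' : List Bool), x ≠ [] ∧ x' <+: x ∧
    z = (List.replicate n x).flatten ++ x' ∧
    (n : ℚ) + (x'.length : ℚ) / (x.length : ℚ) = β

/-- The finite word `w` is `α`-power-free: no subword (contiguous factor) of `w`
is a `β`-power for any rational `β ≥ α`. -/
def PowerFree (α : ℝ) (w : List Bool) : Prop :=
  ∀ z : List Bool, z <:+: w → ∀ β : ℚ, α ≤ (β : ℝ) → ¬ IsPower β z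

/-- The finite word `w` contains an `α`-power: some subword of `w` is a
`β`-power for some rational `β ≥ α`. -/
def ContainsPower (α : ℝ) (w : List Bool) : Prop :=
  ∃ z : List Bool, z <:+: w ∧ ∃ β : ℚ, α ≤ (β : ℝ) ∧ IsPower β z

/-- `z` is a (finite) subword of the infinite word `w : ℕ → Bool`. -/
def InfSubword (z : List Bool) (w : ℕ → Bool) : Prop :=
  ∃ i : ℕ, z = (List.range z.length).map fun k => w (i + k)

/-- The infinite word `w` is `α`-power-free. -/
def PowerFreeInf (α : ℝ) (w : ℕ → Bool) : Prop :=
  ∀ z : List Bool, InfSubword z w → ∀ β : ℚ, α ≤ (β : ℝ) → ¬ IsPower β z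

/-- The infinite word `w` contains an `α`-power. -/
def ContainsPowerInf (α : ℝ) (w : ℕ → Bool) : Prop :=
  ∃ z : List Bool, InfSubword z w ∧ ∃ β : ℚ, α ≤ (β : ℝ) ∧ IsPower β z

/-- The length-`n` prefix of an infinite word. -/
def wordPrefix (w : ℕ → Bool) (n : ℕ) : List Bool := (List.range n).map w

/-- `h : Σ₂* → Σ₂*` is a morphism. -/
def IsMorphism (h : List Bool → List Bool) : Prop :=
  ∀ x y : List Bool, h (x ++ y) = h x ++ h y

/-- A morphism is non-erasing if it erases neither letter. -/
def NonErasing (h : List Bool → List Bool) : Prop :=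
  h [false] ≠ [] ∧ h [true] ≠ []

/-- The infinite word `u` is the image of the infinite word `w` under the morphism `h`
(obtained by concatenating the images of the letters of `w`): every `h(w[0..n))` is a
prefix of `u`, and these prefixes exhaust `u`. -/
def IsMorphImage (h : List Bool → List Bool) (w u : ℕ → Bool) : Prop :=
  (∀ n : ℕ, wordPrefix u (h (wordPrefix w n)).length = h (wordPrefix w n)) ∧
  ∀ m : ℕ, ∃ n : ℕ, m ≤ (h (wordPrefix w n)).length

/-- The complementation morphism `E` : `E(0) = 1`, `E(1) = 0`. -/
def eMorph (w : List Bool) : List Bool := w.map fun b => !b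

/-- The Thue–Morse word `μ^ω(0)` (`tm n` = parity of the binary digit sum of `n`). -/
def tm (n : ℕ) : Bool := (Nat.digits 2 n).sum % 2 == 1

/-- `μ³(0) = 01101001`. -/
def w01101001 : List Bool := [false, true, true, false, true, false, false, true]

/-- `μ³(1) = 10010110`. -/
def w10010110 : List Bool := [true, false, false, true, false, true, true, false]

theorem mu_append (a b : List Bool) : mu (a ++ b) = mu a ++ mu b := by
  simp [mu]

theorem mu_length (a : List Bool) : (mu a).length = 2 * a.length := by
  induction a with
  | nil => rfl
  | cons c t ih =>
    have h : mu (c :: t) = muLetter c ++ mu t := by simp [mu]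
    rw [h, List.length_append, ih]
    cases c <;> simp [muLetter] <;> omega

theorem mu_replicate (n : ℕ) (a : List Bool) :
    mu (List.replicate n a).flatten = (List.replicate n (mu a)).flatten := by
  induction n with
  | zero => rfl
  | succ k ih => simp [List.replicate_succ, mu_append, ih]

theorem isPower_mu {β : ℚ} {z : List Bool} (h : IsPower β z) : IsPower β (mu z) := by
  obtain ⟨n, x, x', hx, ⟨t, ht⟩, hz, hb⟩ := h
  refine ⟨n, mu x, mu x', ?_, ⟨mu t, by rw [← mu_append, ht]⟩, ?_, ?_⟩
  · intro h0
    have h1 := mu_length x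
    rw [h0] at h1
    apply hx
    apply List.length_eq_zero_iff.mp
    simp at h1
    simp [h1]
  · rw [hz, mu_append, mu_replicate]
  · rw [← hb, mu_length, mu_length]
    push_cast
    rw [mul_div_mul_left _ _ (by norm_num : (2 : ℚ) ≠ 0)]

theorem PowerFree.infix_of {α : ℝ} {w z : List Bool} (h : PowerFree α w) (hz : z <:+: w) :
    PowerFree α z := fun t ht => h t (ht.trans hz)

theorem PowerFree.of_mu {α : ℝ} {y : List Bool} (h : PowerFree α (mu y)) : PowerFree α y := by
  intro z hz β hβ hp
  obtain ⟨s, t, rfl⟩ := hz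
  exact h (mu z) ⟨mu s, mu t, by simp [mu_append]⟩ β hβ (isPower_mu hp)

/-- The local obstructions used in the factorization. -/
def Good (w : List Bool) : Prop :=
  ∀ b : Bool, ¬ ([b, b, b] <:+: w) ∧ ¬ ([b, !b, b, !b, b] <:+: w) ∧
    ¬ ([!b, b, b, !b, b, b, !b] <:+: w)

theorem PowerFree.good {α : ℚ} (hα₂ : α ≤ 7/3) {w : List Bool} (h : PowerFree (α : ℝ) w) :
    Good w := by
  intro b
  refine ⟨fun hz => h _ hz 3 ?_ ⟨3, [b], [], by simp, by simp, by simp, by norm_num⟩,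
    fun hz => h _ hz (5/2) ?_ ⟨2, [b, !b], [b], by simp, by simp, by simp, by norm_num⟩,
    fun hz => h _ hz (7/3) ?_
      ⟨2, [!b, b, b], [!b], by simp, by simp, by simp, by norm_num⟩⟩ <;>
  · rw [Rat.cast_le]
    linarith

theorem factor_good (x : List Bool) : Good x →
    ∃ u v y : List Bool,
      u ∈ ([[], [false], [true], [false, false], [true, true]] : List (List Bool)) ∧
      v ∈ ([[], [false], [true], [false, false], [true, true]] : List (List Bool)) ∧
      x = u ++ mu y ++ v := by
  induction x with
  | nil => exact fun _ => ⟨[], [], [], by simp, by simp, by simp [mu]⟩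
  | cons a x ih =>
    intro hg
    have hg' : Good x := fun b =>
      ⟨fun h => (hg b).1 (h.trans (List.suffix_cons a x).isInfix),
       fun h => (hg b).2.1 (h.trans (List.suffix_cons a x).isInfix),
       fun h => (hg b).2.2 (h.trans (List.suffix_cons a x).isInfix)⟩
    obtain ⟨u, v, y, hu, hv, rfl⟩ := ih hg'
    have hgf := hg false
    have hgt := hg true
    have key : ∀ b : Bool, u = [b, b] → ∃ u v' y' : List Bool,
      u ∈ ([[], [false], [true], [false, false], [true, true]] : List (List Bool)) ∧
      v' ∈ ([[], [false], [true], [false, false], [true, true]] : List (List Bool)) ∧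
      a :: ([b, b] ++ mu y ++ v) = u ++ mu y' ++ v' := by
      rintro b rfl
      rcases y with _ | ⟨c, _ | ⟨d, y⟩⟩
      · simp only [List.mem_cons, List.not_mem_nil, or_false] at hv
        rcases hv with rfl | rfl | rfl | rfl | rfl <;> cases a <;> cases b <;>
          first
          | (exfalso; revert hgf hgt; simp [mu]; done)
          | (exfalso; revert hgf hgt; decide)
          | exact ⟨[], [false], [false], by decide⟩
          | exact ⟨[], [true], [false], by decide⟩
          | exact ⟨[], [false], [true], by decide⟩
          | exact ⟨[], [true], [true], by decide⟩
          | exact ⟨[], [], [false, true], by decide⟩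
          | exact ⟨[], [], [true, false], by decide⟩
          | exact ⟨[], [false], [true, false], by decide⟩
          | exact ⟨[], [true], [true, false], by decide⟩
          | exact ⟨[], [false], [false, true], by decide⟩
          | exact ⟨[], [true], [false, true], by decide⟩
      · simp only [List.mem_cons, List.not_mem_nil, or_false] at hv
        rcases hv with rfl | rfl | rfl | rfl | rfl <;> cases a <;> cases b <;> cases c <;>
          first
          | (exfalso; revert hgf hgt; decide)
          | exact ⟨[], [false], [true, false], by decide⟩
          | exact ⟨[], [true], [false, true], by decide⟩
          | exact ⟨[], [], [true, false, false], by decide⟩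
          | exact ⟨[], [], [false, true, true], by decide⟩
          | exact ⟨[], [false, false], [true, false], by decide⟩
          | exact ⟨[], [true, true], [false, true], by decide⟩
          | exact ⟨[], [true], [true, false, false], by decide⟩
          | exact ⟨[], [false], [false, true, true], by decide⟩
      · exfalso
        have hp : a :: b :: b :: (muLetter c ++ muLetter d) <:+:
            a :: ([b, b] ++ mu (c :: d :: y) ++ v) :=
          ⟨[], mu y ++ v, by simp [mu]⟩
        have h0 : ∀ e : Bool, ¬ ([e, e, e] <:+: a :: b :: b :: (muLetter c ++ muLetter d)) ∧
            ¬ ([e, !e, e, !e, e] <:+: a :: b :: b :: (muLetter c ++ muLetter d)) ∧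
            ¬ ([!e, e, e, !e, e, e, !e] <:+: a :: b :: b :: (muLetter c ++ muLetter d)) :=
          fun e => ⟨fun h => (hg e).1 (h.trans hp), fun h => (hg e).2.1 (h.trans hp),
            fun h => (hg e).2.2 (h.trans hp)⟩
        clear hgf hgt hg hg' hp ih
        revert h0
        cases a <;> cases b <;> cases c <;> cases d <;> decide
    simp only [List.mem_cons, List.not_mem_nil, or_false] at hu
    rcases hu with rfl | rfl | rfl | rfl | rfl
    · exact ⟨[a], v, y, by cases a <;> simp, hv, by simp⟩
    · cases a
      · exact ⟨[false, false], v, y, by simp, hv, by simp⟩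
      · exact ⟨[], v, true :: y, by simp, hv, by simp [mu, muLetter]⟩
    · cases a
      · exact ⟨[], v, false :: y, by simp, hv, by simp [mu, muLetter]⟩
      · exact ⟨[true, true], v, y, by simp, hv, by simp⟩
    · exact key false rfl
    · exact key true rfl

/-- Factorization theorem of Karhumäki and Shallit: if `x` avoids `α`-powers with
`2 < α ≤ 7/3`, then `x = u μ(y) v` with `u, v ∈ {ε, 0, 1, 00, 11}` and `y` avoiding
`α`-powers. -/
theorem factorization_of_power_free (α : ℚ) (hα₁ : 2 < α) (hα₂ : α ≤ 7/3)
    (x : List Bool) (hx : PowerFree (α : ℝ) x) :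
    ∃ u v y : List Bool,
      u ∈ ([[], [false], [true], [false, false], [true, true]] : List (List Bool)) ∧
      v ∈ ([[], [false], [true], [false, false], [true, true]] : List (List Bool)) ∧
      PowerFree (α : ℝ) y ∧ x = u ++ mu y ++ v := by
  obtain ⟨u, v, y, hu, hv, rfl⟩ := factor_good x (hx.good hα₂)
  exact ⟨u, v, y, hu, hv, (hx.infix_of ⟨u, v, rfl⟩).of_mu, rfl⟩
end

section
/- Let i, j be natural numbers and let w be a 7/3-power-free finite binary word with |w| = (7 + 2j)·2^i − 1. Let a be a letter of Σ₂. Then the word w a w contains a 7/3-power x as a subword with |x| ≤ 7·2^i. -/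
/-- `f` has, inside the window `[0, L)`, a factor of length at most `m` with exponent at least 7/3. -/
def HasPow (f : ℕ → Bool) (L m : ℕ) : Prop :=
  ∃ p per len : ℕ, 0 < per ∧ p + len ≤ L ∧ 7 * per ≤ 3 * len ∧ len ≤ m ∧
    ∀ k, k + per < len → f (p + k) = f (p + k + per)

lemma no_cube {f : ℕ → Bool} {L : ℕ} (h : ¬ HasPow f L 7) (p : ℕ) (hp : p + 2 < L) :
    ¬ (f p = f (p+1) ∧ f (p+1) = f (p+2)) := by
  rintro ⟨h1, h2⟩
  refine h ⟨p, 1, 3, by omega, by omega, by omega, by omega, ?_⟩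
  intro k hk
  obtain rfl | rfl : k = 0 ∨ k = 1 := by omega
  · exact h1
  · exact h2

lemma no_alt {f : ℕ → Bool} {L : ℕ} (h : ¬ HasPow f L 7) (p : ℕ) (hp : p + 4 < L) :
    ¬ (f p = f (p+2) ∧ f (p+1) = f (p+3) ∧ f (p+2) = f (p+4)) := by
  rintro ⟨h1, h2, h3⟩
  refine h ⟨p, 2, 5, by omega, by omega, by omega, by omega, ?_⟩
  intro k hk
  obtain rfl | rfl | rfl : k = 0 ∨ k = 1 ∨ k = 2 := by omega
  · exact h1
  · exact h2
  · exact h3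

lemma no_three {f : ℕ → Bool} {L : ℕ} (h : ¬ HasPow f L 7) (p : ℕ) (hp : p + 6 < L) :
    ¬ (f p = f (p+3) ∧ f (p+1) = f (p+4) ∧ f (p+2) = f (p+5) ∧ f (p+3) = f (p+6)) := by
  rintro ⟨h1, h2, h3, h4⟩
  refine h ⟨p, 3, 7, by omega, by omega, by omega, by omega, ?_⟩
  intro k hk
  obtain rfl | rfl | rfl | rfl : k = 0 ∨ k = 1 ∨ k = 2 ∨ k = 3 := by omega
  · exact h1
  · exact h2
  · exact h3
  · exact h4

lemma exists_double {f : ℕ → Bool} {L : ℕ} (h : ¬ HasPow f L 7) (p : ℕ) (hp : p + 4 < L) :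
    f p = f (p+1) ∨ f (p+1) = f (p+2) ∨ f (p+2) = f (p+3) ∨ f (p+3) = f (p+4) := by
  have := no_alt h p hp
  revert this
  generalize f p = a
  generalize f (p+1) = b
  generalize f (p+2) = c
  generalize f (p+3) = d
  generalize f (p+4) = e
  revert a b c d e
  decide

/-- Interior doubled letters occur at positions of the same parity. -/
lemma doubles_parity {f : ℕ → Bool} {L : ℕ} (h : ¬ HasPow f L 7) (d : ℕ) :
    ∀ p, 1 ≤ p → p + d + 2 < L → d % 2 = 1 → f p = f (p+1) → f (p+d) = f (p+d+1) → False := by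
  induction d using Nat.strong_induction_on with
  | _ d ih =>
    intro p hp hL hd h1 h2
    by_cases d1 : d = 1
    · subst d1
      exact no_cube h p (by omega) ⟨h1, h2⟩
    by_cases d3 : d = 3
    · subst d3
      obtain ⟨q, rfl⟩ : ∃ q, p = q + 1 := ⟨p - 1, by omega⟩
      have c0 := no_cube h q (by omega)
      have c1 := no_cube h (q+1) (by omega)
      have c3 := no_cube h (q+3) (by omega)
      have c4 := no_cube h (q+4) (by omega)
      have t := no_three h q (by omega)
      simp only [Nat.add_assoc, Nat.reduceAdd] at *
      revert h1 h2 c0 c1 c3 c4 t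
      generalize f q = a
      generalize f (q+1) = b
      generalize f (q+2) = c
      generalize f (q+3) = d
      generalize f (q+4) = e
      generalize f (q+5) = x
      generalize f (q+6) = y
      clear ih
      intros
      cases a <;> cases b <;> cases c <;> cases d <;> cases e <;> cases x <;> cases y <;> simp_all
    have h5 : 5 ≤ d := by omega
    rcases exists_double h (p+1) (by omega) with e | e | e | e
    · exact no_cube h p (by omega) ⟨h1, e⟩
    · refine ih (d-2) (by omega) (p+2) (by omega) (by omega) (by omega) e ?_
      rw [show p + 2 + (d-2) = p + d by omega]; exact h2
    · exact ih 3 (by omega) p hp (by omega) (by omega) h1 e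
    · refine ih (d-4) (by omega) (p+4) (by omega) (by omega) (by omega) e ?_
      rw [show p + 4 + (d-4) = p + d by omega]; exact h2

lemma base_case (j : ℕ) (f : ℕ → Bool)
    (hf : ∀ n, n + 1 < 7 + 2 * j → f (n + (7 + 2 * j)) = f n) :
    HasPow f (2 * (7 + 2 * j) - 1) 7 := by
  by_contra h
  have key : ∀ p, 1 ≤ p → p + 4 ≤ 7 + 2 * j → f p ≠ f (p+1) := by
    intro p h1 h2 e
    refine doubles_parity h (7 + 2*j) p h1 (by omega) (by omega) e ?_
    rw [hf p (by omega), show p + (7+2*j) + 1 = (p+1) + (7+2*j) by omega, hf (p+1) (by omega)]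
    exact e
  by_cases hj : j = 0
  · subst hj
    have k1 := key 1 (by omega) (by omega)
    have k2 := key 2 (by omega) (by omega)
    have k3 := key 3 (by omega) (by omega)
    have a0 := no_alt h 0 (by omega)
    have a1 := no_alt h 1 (by omega)
    have c4 := no_cube h 4 (by omega)
    have c6 := no_cube h 6 (by omega)
    have p0 := hf 0 (by omega)
    have p1 := hf 1 (by omega)
    simp only [Nat.reduceAdd, Nat.reduceMul] at *
    rw [p0, p1] at c6
    revert k1 k2 k3 a0 a1 c4 c6
    clear p0 p1 key hf h
    generalize f 0 = a
    generalize f 1 = b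
    generalize f 2 = c
    generalize f 3 = d
    generalize f 4 = e
    generalize f 5 = x
    generalize f 6 = y
    revert a b c d e x y
    decide
  · rcases exists_double h 1 (by omega) with e | e | e | e
    · exact key 1 (by omega) (by omega) e
    · exact key 2 (by omega) (by omega) e
    · exact key 3 (by omega) (by omega) e
    · exact key 4 (by omega) (by omega) e

lemma core (i j : ℕ) : ∀ (f : ℕ → Bool),
    (∀ n, n + 1 < (7 + 2 * j) * 2 ^ i → f (n + (7 + 2 * j) * 2 ^ i) = f n) →
    HasPow f (2 * ((7 + 2 * j) * 2 ^ i) - 1) (7 * 2 ^ i) := by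
  induction i with
  | zero => intro f hf; simpa using base_case j f (by simpa using hf)
  | succ i ih =>
    intro f hf
    have hpos : 1 ≤ 2 ^ i := Nat.one_le_two_pow
    have hM : 7 ≤ (7 + 2 * j) * 2 ^ i := by nlinarith
    have e1 : (7 + 2 * j) * 2 ^ (i+1) = 2 * ((7 + 2 * j) * 2 ^ i) := by ring
    have e2 : 7 * 2 ^ (i+1) = 2 * (7 * 2 ^ i) := by ring
    rw [e1] at hf ⊢
    rw [e2]
    generalize (7 + 2 * j) * 2 ^ i = M at *
    by_cases h : HasPow f (2 * (2 * M) - 1) 7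
    · obtain ⟨p, per, len, h1, h2, h3, h4, h5⟩ := h
      exact ⟨p, per, len, h1, h2, h3, by omega, h5⟩
    obtain ⟨ε, hε, hint⟩ : ∃ ε, ε < 2 ∧
        ∀ p, 1 ≤ p → p + 2 < 2 * (2 * M) - 1 → p % 2 = ε → f p ≠ f (p+1) := by
      by_cases hd : ∃ p, 1 ≤ p ∧ p + 2 < 2 * (2 * M) - 1 ∧ f p = f (p+1)
      · obtain ⟨p, hp1, hp2, hp3⟩ := hd
        refine ⟨(p+1) % 2, by omega, ?_⟩
        intro q hq1 hq2 hq3 hq4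
        rcases Nat.lt_or_ge p q with hlt | hge
        · refine doubles_parity h (q - p) p hp1 (by omega) (by omega) hp3 ?_
          rw [show p + (q - p) = q by omega]; exact hq4
        · refine doubles_parity h (p - q) q hq1 (by omega) (by omega) hq4 ?_
          rw [show q + (p - q) = p by omega]; exact hp3
      · exact ⟨0, by omega, fun p h1 h2 _ h3 => hd ⟨p, h1, h2, h3⟩⟩
    have hall : ∀ p, p + 1 < 2 * (2 * M) - 1 → p % 2 = ε → f p ≠ f (p+1) := by
      intro p hp he
      by_cases p0 : p = 0
      · subst p0
        have := hint (0 + 2 * M) (by omega) (by omega) (by omega)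
        rwa [hf 0 (by omega), show 0 + 2 * M + 1 = 1 + 2 * M by omega, hf 1 (by omega)] at this
      by_cases p1 : p + 2 < 2 * (2 * M) - 1
      · exact hint p (by omega) p1 he
      · have := hint (p - 2 * M) (by omega) (by omega) (by omega)
        have q0 := hf (p - 2 * M) (by omega)
        have q1 := hf (p - 2 * M + 1) (by omega)
        rw [show p - 2 * M + 2 * M = p by omega] at q0
        rw [show p - 2 * M + 1 + 2 * M = p + 1 by omega] at q1
        rwa [q0, q1]
    obtain ⟨p, per, len, h1, h2, h3, h4, h5⟩ := ih (fun k => f (2 * k + ε)) (by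
      intro n hn
      show f (2 * (n + M) + ε) = f (2 * n + ε)
      rw [show 2 * (n + M) + ε = 2 * n + ε + 2 * M by omega]
      exact hf _ (by omega))
    refine ⟨2 * p + ε, 2 * per, 2 * len, by omega, by omega, by omega, by omega, ?_⟩
    intro k hk
    have hb := h5 (k / 2) (by omega)
    simp only at hb
    rcases Nat.mod_two_eq_zero_or_one k with hk2 | hk2
    · rw [show 2 * p + ε + k = 2 * (p + k / 2) + ε by omega,
        show 2 * (p + k / 2) + ε + 2 * per = 2 * (p + k / 2 + per) + ε by omega]
      exact hb
    · rw [show 2 * p + ε + k = 2 * (p + k / 2) + ε + 1 by omega,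
        show 2 * (p + k / 2) + ε + 1 + 2 * per = 2 * (p + k / 2 + per) + ε + 1 by omega]
      have n1 := hall (2 * (p + k / 2) + ε) (by omega) (by omega)
      have n2 := hall (2 * (p + k / 2 + per) + ε) (by omega) (by omega)
      revert hb n1 n2
      generalize f (2 * (p + k / 2) + ε) = a
      generalize f (2 * (p + k / 2) + ε + 1) = b
      generalize f (2 * (p + k / 2 + per) + ε) = c
      generalize f (2 * (p + k / 2 + per) + ε + 1) = d
      revert a b c d
      decide

lemma map_range_periodic (h : ℕ → Bool) (per : ℕ) (hp : ∀ k, h (per + k) = h k) (n r : ℕ) :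
    (List.range (n * per + r)).map h =
      (List.replicate n ((List.range per).map h)).flatten ++ (List.range r).map h := by
  induction n with
  | zero => simp
  | succ n ih =>
    rw [show (n + 1) * per + r = per + (n * per + r) by ring, List.range_add, List.map_append,
      List.map_map, List.replicate_succ, List.flatten_cons, List.append_assoc, ← ih]
    congr 1
    apply List.map_congr_left
    intro k _
    exact hp k

lemma isPower_of_hasPow (W : List Bool) (m : ℕ)
    (H : HasPow (fun n => W.getD n false) W.length m) :
    ∃ x : List Bool, x <:+: W ∧ x.length ≤ m ∧
      ∃ β : ℚ, (7/3 : ℝ) ≤ (β : ℝ) ∧ IsPower β x := by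
  obtain ⟨p, per, len, h1, h2, h3, h4, h5⟩ := H
  simp only at h5
  have hmod : ∀ k, k < len → W.getD (p + k) false = W.getD (p + k % per) false := by
    intro k
    induction k using Nat.strong_induction_on with
    | _ k ih =>
      intro hk
      by_cases hkp : k < per
      · rw [Nat.mod_eq_of_lt hkp]
      · have a := ih (k - per) (by omega) (by omega)
        have b := h5 (k - per) (by omega)
        rw [show p + (k - per) + per = p + k by omega] at b
        rw [← b, a, Nat.mod_eq_sub_mod (by omega : k ≥ per)]
  have hdm : len / per * per + len % per = len := Nat.div_add_mod' len per
  have hlt : len % per < per := Nat.mod_lt _ h1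
  let h : ℕ → Bool := fun k => W.getD (p + k % per) false
  have hx : (W.drop p).take len = (List.range (len / per * per + len % per)).map h := by
    rw [hdm]
    apply List.ext_getElem
    · simp; omega
    · intro k ha hb
      have hk : k < len := by simpa using hb
      have := hmod k hk
      rw [List.getD_eq_getElem _ _ (by omega)] at this
      simp [h, this]
  have hlen : ((W.drop p).take len).length = len := by simp; omega
  refine ⟨(W.drop p).take len, ?_, by omega, (len : ℚ) / per, ?_, len / per,
    (List.range per).map h, (List.range (len % per)).map h, ?_, ?_, ?_, ?_⟩
  · exact (List.take_prefix _ _).isInfix.trans (List.drop_suffix _ _).isInfix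
  · push_cast
    have : (0:ℝ) < per := by exact_mod_cast h1
    rw [div_le_div_iff₀ (by norm_num) this]
    have : (7 * per : ℝ) ≤ 3 * len := by exact_mod_cast h3
    linarith
  · intro hc
    have := congrArg List.length hc
    simp at this
    omega
  · refine List.IsPrefix.map h ?_
    have : per = len % per + (per - len % per) := by omega
    conv_rhs => rw [this, List.range_add]
    exact List.prefix_append _ _
  · rw [hx]
    exact map_range_periodic h per (fun k => by simp [h]) _ _
  · simp only [List.length_map, List.length_range]
    have : (per : ℚ) ≠ 0 := by exact_mod_cast h1.ne'
    field_simp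
    exact_mod_cast hdm

/-- If `w` is `7/3`-power-free with `|w| = (7+2j)·2^i − 1` and `a` is a letter, then
`w a w` contains a `7/3`-power `x` with `|x| ≤ 7·2^i`. -/
theorem waw_contains_power_seven (i j : ℕ) (w : List Bool)
    (hw : PowerFree (7/3 : ℝ) w) (hlen : w.length = (7 + 2 * j) * 2 ^ i - 1)
    (a : Bool) :
    ∃ x : List Bool, x <:+: (w ++ [a] ++ w) ∧ x.length ≤ 7 * 2 ^ i ∧
      ∃ β : ℚ, (7/3 : ℝ) ≤ (β : ℝ) ∧ IsPower β x := by
  have hN : 7 ≤ (7 + 2 * j) * 2 ^ i := by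
    have : 1 ≤ 2 ^ i := Nat.one_le_two_pow
    nlinarith
  apply isPower_of_hasPow
  have hL : (w ++ [a] ++ w).length = 2 * ((7 + 2 * j) * 2 ^ i) - 1 := by
    simp only [List.length_append, List.length_singleton, hlen]; omega
  rw [hL]
  apply core
  intro n hn
  generalize (7 + 2 * j) * 2 ^ i = N at *
  show (w ++ [a] ++ w).getD (n + N) false = (w ++ [a] ++ w).getD n false
  have hwa : (w ++ [a]).length = N := by simp; omega
  rw [List.getD_append_right _ _ _ _ (by omega), hwa, Nat.add_sub_cancel, List.append_assoc,
    List.getD_append _ _ _ _ (by omega)]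
end
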